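/- arXiv:2105.09037 — 5 statements merged into one kernel-verified Lean document; each statement's English description precedes it below -/
import Mathlib

section
/- Every non-signalling behaviour P with two settings x,y ∈ {0,1} and S_max ≥ 2 decomposes pointwise as a convex mixture P = p·P̄ + (1−p)·P̃ with p = (4 − S_max)/2, where P̄ is a behaviour admitting an LHV+FHV model and P̃ is a PR box (a non-signalling two-setting behaviour whose maximal absolute CHSH value equals 4). -/
/-!
Fix a Boolean matrix `c` of odd parity. It selects a CHSH expression `chsh c`, and the PR box `prBox c`
that is uniform over the outcomes with `xor a b = c x y`. Call an outcome pair with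
`xor a b ≠ c x y` an error at `(x, y)`. There are eight possible errors, and each of them is made by
exactly one deterministic local strategy that satisfies the other three constraints (odd parity is
what makes that strategy consistent). Weighting each of these eight strategies by the probability
that `P` gives to its error, and filling up the total weight with `prBox c`, gives back `P`:
this is a linear identity following from non-signalling and normalisation (`decomposition`).
The total error weight `W` satisfies `chsh c P = 4 - 2 * W` (`errorTotal_eq`), and `Smax P` is
`chsh c P` for some odd `c` (`exists_chsh_eq_Smax`), so `W = (4 - Smax P) / 2`.
It remains to normalise the weights (`exists_normalised`).
-/

open scoped BigOperators Classical
open Finset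

noncomputable section

/-- The real value `±1` associated with a Boolean outcome. -/
def outVal (a : Bool) : ℝ := if a then 1 else -1

/-- A behaviour: nonnegative probabilities summing to one for every pair of settings. -/
def IsBehaviour {M N : ℕ} (P : Bool → Bool → Fin M → Fin N → ℝ) : Prop :=
  (∀ a b x y, 0 ≤ P a b x y) ∧ (∀ x y, ∑ a, ∑ b, P a b x y = 1)

/-- The correlator `⟨ab⟩_{xy}`. -/
def corr {M N : ℕ} (P : Bool → Bool → Fin M → Fin N → ℝ) (x : Fin M) (y : Fin N) : ℝ :=
  ∑ a, ∑ b, outVal a * outVal b * P a b x y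

/-- Non-signalling for a two-setting behaviour. -/
def NonSignalling (P : Bool → Bool → Fin 2 → Fin 2 → ℝ) : Prop :=
  (∀ a x y y', ∑ b, P a b x y = ∑ b, P a b x y') ∧
  (∀ b y x x', ∑ a, P a b x y = ∑ a, P a b x' y)

def S1 (P : Bool → Bool → Fin 2 → Fin 2 → ℝ) : ℝ :=
  corr P 0 0 + corr P 0 1 + corr P 1 0 - corr P 1 1

def S2 (P : Bool → Bool → Fin 2 → Fin 2 → ℝ) : ℝ :=
  corr P 0 0 + corr P 0 1 - corr P 1 0 + corr P 1 1

def S3 (P : Bool → Bool → Fin 2 → Fin 2 → ℝ) : ℝ :=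
  corr P 0 0 - corr P 0 1 + corr P 1 0 + corr P 1 1

def S4 (P : Bool → Bool → Fin 2 → Fin 2 → ℝ) : ℝ :=
  -corr P 0 0 + corr P 0 1 + corr P 1 0 + corr P 1 1

/-- Maximal absolute value of the four CHSH expressions. -/
def Smax (P : Bool → Bool → Fin 2 → Fin 2 → ℝ) : ℝ :=
  max (max |S1 P| |S2 P|) (max |S3 P| |S4 P|)

/-- A behaviour admits an LHV+FHV model (is local-free). -/
def LocalFree {M N : ℕ} (P : Bool → Bool → Fin M → Fin N → ℝ) : Prop :=
  ∃ (n : ℕ) (q : Fin n → ℝ) (A : Bool → Fin M → Fin n → ℝ) (B : Bool → Fin N → Fin n → ℝ),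
    (∀ l, 0 ≤ q l) ∧ (∑ l, q l = 1) ∧
    (∀ a x l, 0 ≤ A a x l) ∧ (∀ x l, ∑ a, A a x l = 1) ∧
    (∀ b y l, 0 ≤ B b y l) ∧ (∀ y l, ∑ b, B b y l = 1) ∧
    (∀ a b x y, P a b x y = ∑ l, q l * A a x l * B b y l)

/-- The parity of the entries of `c` is odd, so that no deterministic local strategy satisfies
`xor (α x) (β y) = c x y` for all four pairs of settings. -/
def OddParity (c : Fin 2 → Fin 2 → Bool) : Prop :=
  xor (xor (c 0 0) (c 0 1)) (xor (c 1 0) (c 1 1)) = true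

/-- The CHSH expression that rewards `xor a b = c x y`; for odd `c` these are the `± S_i`. -/
def chsh (c : Fin 2 → Fin 2 → Bool) (P : Bool → Bool → Fin 2 → Fin 2 → ℝ) : ℝ :=
  ∑ x, ∑ y, (if c x y then -1 else 1) * corr P x y

/-- The PR box with `xor a b = c x y` and uniform marginals. -/
def prBox (c : Fin 2 → Fin 2 → Bool) (a b : Bool) (x y : Fin 2) : ℝ :=
  if xor a b = c x y then 1 / 2 else 0

/-- Labels `(x₀, y₀, a₀)` of the errors: at settings `(x₀, y₀)` the first party outputs `a₀` and the
second one outputs `errOut`, violating the constraint of `c`. -/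
abbrev Err : Type := Fin 2 × Fin 2 × Bool

/-- Outcome of the second party in the error `l`. -/
def errOut (c : Fin 2 → Fin 2 → Bool) (l : Err) : Bool :=
  !(xor l.2.2 (c l.1 l.2.1))

/-- First party's output in the deterministic strategy whose only error is `l`. -/
def stratA (c : Fin 2 → Fin 2 → Bool) (l : Err) (x : Fin 2) : Bool :=
  if x = l.1 then l.2.2 else xor (errOut c l) (c x l.2.1)

/-- Second party's output in the deterministic strategy whose only error is `l`. -/
def stratB (c : Fin 2 → Fin 2 → Bool) (l : Err) (y : Fin 2) : Bool :=
  if y = l.2.1 then errOut c l else xor l.2.2 (c l.1 y)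

/-- Probability that `P` gives to the error `l`. -/
def errProb (c : Fin 2 → Fin 2 → Bool) (P : Bool → Bool → Fin 2 → Fin 2 → ℝ) (l : Err) : ℝ :=
  P l.2.2 (errOut c l) l.1 l.2.1

lemma errorTotal_eq (c : Fin 2 → Fin 2 → Bool) (P : Bool → Bool → Fin 2 → Fin 2 → ℝ)
    (hP : IsBehaviour P) : ∑ l, errProb c P l = (4 - chsh c P) / 2 := by
  have h : ∀ x y, ∑ a, errProb c P (x, y, a) =
      (1 - (if c x y then -1 else 1) * corr P x y) / 2 := by
    intro x y
    have hn := hP.2 x y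
    simp only [Fintype.sum_bool] at hn
    cases hc : c x y <;>
      simp [errProb, errOut, hc, corr, outVal] <;> linarith
  simp only [Fintype.sum_prod_type, h, chsh, Fin.sum_univ_two]
  ring

set_option maxHeartbeats 4000000 in
/-- A non-signalling behaviour is the mixture of the eight one-error strategies, weighted by the
error probabilities of `P`, with `prBox c`. -/
lemma decomposition (c : Fin 2 → Fin 2 → Bool) (hc : OddParity c)
    (P : Bool → Bool → Fin 2 → Fin 2 → ℝ) (hP : IsBehaviour P) (hNS : NonSignalling P)
    (a b : Bool) (x y : Fin 2) :
    P a b x y = ∑ l, errProb c P l * (if a = stratA c l x then 1 else 0) *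
      (if b = stratB c l y then 1 else 0) + (1 - ∑ l, errProb c P l) * prBox c a b x y := by
  have n00 := hP.2 0 0
  have n01 := hP.2 0 1
  have n10 := hP.2 1 0
  have n11 := hP.2 1 1
  have a0 := hNS.1 true 0 0 1
  have a1 := hNS.1 true 1 0 1
  have b0 := hNS.2 true 0 0 1
  have b1 := hNS.2 true 1 0 1
  simp only [Fintype.sum_bool] at n00 n01 n10 n11 a0 a1 b0 b1
  unfold OddParity at hc
  cases h00 : c 0 0 <;> cases h01 : c 0 1 <;> cases h10 : c 1 0 <;> cases h11 : c 1 1 <;>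
    simp [h00, h01, h10, h11] at hc <;>
    fin_cases x <;> fin_cases y <;> cases a <;> cases b <;>
    simp [Fintype.sum_prod_type, errProb, errOut, stratA, stratB, prBox, h00, h01, h10, h11] <;>
    linarith

lemma prBox_isBehaviour (c : Fin 2 → Fin 2 → Bool) : IsBehaviour (prBox c) := by
  constructor
  · intro a b x y
    unfold prBox
    split_ifs <;> norm_num
  · intro x y
    cases h : c x y <;> norm_num [prBox, h]

lemma prBox_nonSignalling (c : Fin 2 → Fin 2 → Bool) : NonSignalling (prBox c) := by
  constructor
  · intro a x y y'
    cases a <;> cases h : c x y <;> cases h' : c x y' <;> simp [prBox, h, h']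
  · intro b y x x'
    cases b <;> cases h : c x y <;> cases h' : c x' y <;> simp [prBox, h, h']

lemma corr_prBox (c : Fin 2 → Fin 2 → Bool) (x y : Fin 2) :
    corr (prBox c) x y = if c x y then -1 else 1 := by
  cases h : c x y <;> simp [corr, outVal, prBox, h] <;> norm_num

lemma Smax_prBox (c : Fin 2 → Fin 2 → Bool) (hc : OddParity c) : Smax (prBox c) = 4 := by
  unfold OddParity at hc
  cases h00 : c 0 0 <;> cases h01 : c 0 1 <;> cases h10 : c 1 0 <;> cases h11 : c 1 1 <;>
    simp [h00, h01, h10, h11] at hc <;>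
    norm_num [Smax, S1, S2, S3, S4, corr_prBox, h00, h01, h10, h11]

lemma exists_chsh_eq_Smax (P : Bool → Bool → Fin 2 → Fin 2 → ℝ) :
    ∃ c, OddParity c ∧ Smax P = chsh c P := by
  -- every `± S_i` is `chsh c` for the matrix `c` marking its negative coefficients
  have key : ∀ p q r s : Bool, xor (xor p q) (xor r s) = true →
      Smax P = (if p then -1 else 1) * corr P 0 0 + (if q then -1 else 1) * corr P 0 1 +
        (if r then -1 else 1) * corr P 1 0 + (if s then -1 else 1) * corr P 1 1 →
      ∃ c, OddParity c ∧ Smax P = chsh c P := by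
    intro p q r s hodd h
    refine ⟨![![p, q], ![r, s]], by simpa [OddParity] using hodd, ?_⟩
    rw [h]
    cases p <;> cases q <;> cases r <;> cases s <;> simp [chsh, Fin.sum_univ_two] <;> ring
  have hmax : Smax P = |S1 P| ∨ Smax P = |S2 P| ∨ Smax P = |S3 P| ∨ Smax P = |S4 P| := by
    unfold Smax
    rcases max_choice (max |S1 P| |S2 P|) (max |S3 P| |S4 P|) with h | h <;> rw [h]
    · rcases max_choice |S1 P| |S2 P| with h | h <;> simp [h]
    · rcases max_choice |S3 P| |S4 P| with h | h <;> simp [h]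
  rcases hmax with h | h | h | h
  · rcases abs_choice (S1 P) with h' | h' <;> rw [h', S1] at h
    · exact key false false false true rfl (by simp; linarith)
    · exact key true true true false rfl (by simp; linarith)
  · rcases abs_choice (S2 P) with h' | h' <;> rw [h', S2] at h
    · exact key false false true false rfl (by simp; linarith)
    · exact key true true false true rfl (by simp; linarith)
  · rcases abs_choice (S3 P) with h' | h' <;> rw [h', S3] at h
    · exact key false true false false rfl (by simp; linarith)
    · exact key true false true true rfl (by simp; linarith)
  · rcases abs_choice (S4 P) with h' | h' <;> rw [h', S4] at h
    · exact key true false false false rfl (by simp; linarith)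
    · exact key false true true true rfl (by simp; linarith)

/-- Nonnegative weights are their total times a probability distribution, also when the total
vanishes. -/
lemma exists_normalised {ι : Type*} [Fintype ι] [Nonempty ι] (w : ι → ℝ) (hw : ∀ l, 0 ≤ w l) :
    ∃ q : ι → ℝ, (∀ l, 0 ≤ q l) ∧ ∑ l, q l = 1 ∧ ∀ l, w l = (∑ m, w m) * q l := by
  by_cases h : ∑ m, w m = 0
  · have hz : ∀ l, w l = 0 := fun l =>
      (Finset.sum_eq_zero_iff_of_nonneg fun l _ => hw l).1 h l (Finset.mem_univ l)
    refine ⟨fun _ => (Fintype.card ι : ℝ)⁻¹, fun _ => by positivity, by simp, fun l => ?_⟩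
    rw [h, hz l, zero_mul]
  · refine ⟨fun l => w l / ∑ m, w m, fun l => div_nonneg (hw l) (Finset.sum_nonneg fun m _ => hw m),
      ?_, fun l => ?_⟩
    · rw [← Finset.sum_div, div_self h]
    · field_simp

lemma localFree_of_deterministic {M N : ℕ} {ι : Type*} [Fintype ι] (q : ι → ℝ)
    (hq : ∀ l, 0 ≤ q l) (hq1 : ∑ l, q l = 1) (α : ι → Fin M → Bool) (β : ι → Fin N → Bool) :
    LocalFree fun a b x y => ∑ l, q l * (if a = α l x then 1 else 0) *
      (if b = β l y then 1 else 0) := by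
  let e := (Fintype.equivFin ι).symm
  refine ⟨Fintype.card ι, fun l => q (e l), fun a x l => if a = α (e l) x then 1 else 0,
    fun b y l => if b = β (e l) y then 1 else 0, fun l => hq _, ?_, ?_, ?_, ?_, ?_, ?_⟩
  · rw [← hq1]
    exact e.sum_comp q
  · intro a x l
    dsimp only
    split_ifs <;> norm_num
  · intro x l
    simp only [Finset.sum_ite_eq', Finset.mem_univ, if_true]
  · intro b y l
    dsimp only
    split_ifs <;> norm_num
  · intro y l
    simp only [Finset.sum_ite_eq', Finset.mem_univ, if_true]
  · intro a b x y
    exact (e.sum_comp fun l => q l * (if a = α l x then 1 else 0) *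
      (if b = β l y then 1 else 0)).symm

lemma LocalFree.isBehaviour {M N : ℕ} {P : Bool → Bool → Fin M → Fin N → ℝ}
    (h : LocalFree P) : IsBehaviour P := by
  obtain ⟨n, q, A, B, hq, hq1, hA, hA1, hB, hB1, hP⟩ := h
  constructor
  · intro a b x y
    rw [hP]
    exact Finset.sum_nonneg fun l _ => mul_nonneg (mul_nonneg (hq l) (hA a x l)) (hB b y l)
  · intro x y
    have hl : ∀ l, ∑ a, ∑ b, q l * A a x l * B b y l = q l := by
      intro l
      simp only [← Finset.mul_sum, hB1, hA1, mul_one]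
    calc ∑ a, ∑ b, P a b x y = ∑ a, ∑ b, ∑ l, q l * A a x l * B b y l := by simp only [hP]
      _ = ∑ a, ∑ l, ∑ b, q l * A a x l * B b y l :=
        Finset.sum_congr rfl fun a _ => Finset.sum_comm
      _ = ∑ l, ∑ a, ∑ b, q l * A a x l * B b y l := Finset.sum_comm
      _ = 1 := by rw [← hq1]; exact Finset.sum_congr rfl fun l _ => hl l

theorem nonsignalling_local_PR_decomposition (P : Bool → Bool → Fin 2 → Fin 2 → ℝ)
    (hP : IsBehaviour P) (hNS : NonSignalling P) (hS : 2 ≤ Smax P) :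
    ∃ Pbar Ptil : Bool → Bool → Fin 2 → Fin 2 → ℝ,
      IsBehaviour Pbar ∧ LocalFree Pbar ∧
      IsBehaviour Ptil ∧ NonSignalling Ptil ∧ Smax Ptil = 4 ∧
      ∀ a b x y, P a b x y = ((4 - Smax P) / 2) * Pbar a b x y +
        (1 - (4 - Smax P) / 2) * Ptil a b x y := by
  obtain ⟨c, hc, hmax⟩ := exists_chsh_eq_Smax P
  have hW := errorTotal_eq c P hP
  rw [← hmax] at hW
  obtain ⟨q, hq, hq1, hwq⟩ := exists_normalised (errProb c P) fun l => hP.1 _ _ _ _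
  have hloc := localFree_of_deterministic q hq hq1 (stratA c) (stratB c)
  refine ⟨_, prBox c, hloc.isBehaviour, hloc, prBox_isBehaviour c, prBox_nonSignalling c,
    Smax_prBox c hc, fun a b x y => ?_⟩
  rw [decomposition c hc P hP hNS a b x y, ← hW, Finset.mul_sum]
  congr 1
  refine Finset.sum_congr rfl fun l _ => ?_
  linear_combination (if a = stratA c l x then 1 else 0) * (if b = stratB c l y then 1 else 0) * hwq l
end
end

section
/- Let P be a behaviour with two settings x,y ∈ {0,1}. If P decomposes pointwise as P = p·P_L + (1−p)·Q with p ∈ [0,1], P_L a behaviour admitting an LHV+FHV model, and Q an arbitrary behaviour, then p ≤ (4 − |S_i(P)|)/2 for each i = 1,…,4, where S_i(P) are the CHSH expressions of P. -/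
/-!
At a fixed hidden variable the correlator of an LHV+FHV model factorizes as `α x * β y` with
`|α x|, |β y| ≤ 1`, so the CHSH combination is at most `2` in absolute value, and this survives
averaging over the hidden variable (`chsh_localFree`). An arbitrary behaviour satisfies only the
algebraic bound `4` (from `abs_corr_le_one`). Correlators are affine in the behaviour, hence
`|S P| ≤ 2 * p + 4 * (1 - p)`, which is the claim. The four CHSH expressions differ only by
exchanging the two settings of one or both parties, so the bound is proved once, for
arbitrary settings `x, x', y, y'` (`chsh_decomposition`).
-/

open scoped BigOperators Classical
open Finset

noncomputable section

lemma abs_corr_le_one {M N : ℕ} {P : Bool → Bool → Fin M → Fin N → ℝ} (hP : IsBehaviour P)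
    (x : Fin M) (y : Fin N) : |corr P x y| ≤ 1 := by
  have h := hP.2 x y
  have h1 := hP.1 true true x y
  have h2 := hP.1 true false x y
  have h3 := hP.1 false true x y
  have h4 := hP.1 false false x y
  simp only [Fintype.sum_bool] at h
  simp only [corr, outVal, Fintype.sum_bool, abs_le]
  norm_num
  constructor <;> linarith

lemma abs_chsh_le_two {a a' b b' : ℝ} (ha : |a| ≤ 1) (ha' : |a'| ≤ 1) (hb : |b| ≤ 1)
    (hb' : |b'| ≤ 1) : |a * b + a * b' + a' * b - a' * b'| ≤ 2 := by
  have h1 : |a * (b + b')| ≤ |b + b'| := by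
    rw [abs_mul]; exact mul_le_of_le_one_left (abs_nonneg _) ha
  have h2 : |a' * (b - b')| ≤ |b - b'| := by
    rw [abs_mul]; exact mul_le_of_le_one_left (abs_nonneg _) ha'
  have h3 : |b + b'| + |b - b'| ≤ 2 := by
    -- the left-hand side equals twice the larger of the two absolute values
    rw [abs_le] at hb hb'
    rcases abs_cases (b + b') with h | h <;> rcases abs_cases (b - b') with h' | h' <;> linarith
  calc |a * b + a * b' + a' * b - a' * b'| = |a * (b + b') + a' * (b - b')| := by
        congr 1; ring
    _ ≤ |a * (b + b')| + |a' * (b - b')| := abs_add_le _ _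
    _ ≤ 2 := by linarith

/-- The CHSH inequality for LHV+FHV models, at arbitrary settings. -/
lemma chsh_localFree {M N : ℕ} {P : Bool → Bool → Fin M → Fin N → ℝ} (hP : LocalFree P)
    (x x' : Fin M) (y y' : Fin N) :
    |corr P x y + corr P x y' + corr P x' y - corr P x' y'| ≤ 2 := by
  obtain ⟨n, q, A, B, hq, hq1, hA, hA1, hB, hB1, hPAB⟩ := hP
  -- the expected outcomes of the two parties at a given hidden variable
  let α : Fin M → Fin n → ℝ := fun x l => A true x l - A false x l
  let β : Fin N → Fin n → ℝ := fun y l => B true y l - B false y l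
  have hα : ∀ x l, |α x l| ≤ 1 := fun x l => by
    have h := hA1 x l
    have h1 := hA true x l
    have h2 := hA false x l
    rw [Fintype.sum_bool] at h
    simp only [α, abs_le]
    constructor <;> linarith
  have hβ : ∀ y l, |β y l| ≤ 1 := fun y l => by
    have h := hB1 y l
    have h1 := hB true y l
    have h2 := hB false y l
    rw [Fintype.sum_bool] at h
    simp only [β, abs_le]
    constructor <;> linarith
  have hcorr : ∀ x y, corr P x y = ∑ l, q l * (α x l * β y l) := fun x y => by
    simp only [corr, outVal, Fintype.sum_bool, hPAB, Finset.mul_sum, ← Finset.sum_add_distrib]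
    refine Finset.sum_congr rfl fun l _ => ?_
    simp only [α, β, if_true, Bool.false_eq_true, if_false]
    ring
  calc _ = |∑ l, q l * (α x l * β y l + α x l * β y' l + α x' l * β y l - α x' l * β y' l)| := by
        simp only [hcorr, mul_add, mul_sub, Finset.sum_add_distrib, Finset.sum_sub_distrib]
    _ ≤ ∑ l, |q l * (α x l * β y l + α x l * β y' l + α x' l * β y l - α x' l * β y' l)| :=
        Finset.abs_sum_le_sum_abs _ _
    _ ≤ ∑ l, q l * 2 := Finset.sum_le_sum fun l _ => by
        rw [abs_mul, abs_of_nonneg (hq l)]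
        exact mul_le_mul_of_nonneg_left
          (abs_chsh_le_two (hα x l) (hα x' l) (hβ y l) (hβ y' l)) (hq l)
    _ = 2 := by rw [← Finset.sum_mul, hq1, one_mul]

lemma chsh_decomposition {M N : ℕ} {P PL Q : Bool → Bool → Fin M → Fin N → ℝ}
    (hQ : IsBehaviour Q) (hLF : LocalFree PL) {p : ℝ} (hp : p ∈ Set.Icc (0 : ℝ) 1)
    (hdec : ∀ a b x y, P a b x y = p * PL a b x y + (1 - p) * Q a b x y)
    (x x' : Fin M) (y y' : Fin N) :
    |corr P x y + corr P x y' + corr P x' y - corr P x' y'| ≤ 4 - 2 * p := by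
  have hcorr : ∀ x y, corr P x y = p * corr PL x y + (1 - p) * corr Q x y := fun x y => by
    simp only [corr, Fintype.sum_bool, hdec]
    ring
  have hL := chsh_localFree hLF x x' y y'
  have hQ4 : |corr Q x y + corr Q x y' + corr Q x' y - corr Q x' y'| ≤ 4 := by
    have h1 := abs_le.1 (abs_corr_le_one hQ x y)
    have h2 := abs_le.1 (abs_corr_le_one hQ x y')
    have h3 := abs_le.1 (abs_corr_le_one hQ x' y)
    have h4 := abs_le.1 (abs_corr_le_one hQ x' y')
    rw [abs_le]
    constructor <;> linarith
  have hp' : 0 ≤ 1 - p := sub_nonneg.2 hp.2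
  calc _ = |p * (corr PL x y + corr PL x y' + corr PL x' y - corr PL x' y')
          + (1 - p) * (corr Q x y + corr Q x y' + corr Q x' y - corr Q x' y')| := by
        simp only [hcorr]; congr 1; ring
    _ ≤ p * 2 + (1 - p) * 4 := by
        refine (abs_add_le _ _).trans ?_
        rw [abs_mul, abs_mul, abs_of_nonneg hp.1, abs_of_nonneg hp']
        exact add_le_add (mul_le_mul_of_nonneg_left hL hp.1) (mul_le_mul_of_nonneg_left hQ4 hp')
    _ = 4 - 2 * p := by ring

theorem decomposition_CHSH_bound (P PL Q : Bool → Bool → Fin 2 → Fin 2 → ℝ)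
    (hP : IsBehaviour P) (hPL : IsBehaviour PL) (hQ : IsBehaviour Q)
    (hLF : LocalFree PL) (p : ℝ) (hp : p ∈ Set.Icc (0 : ℝ) 1)
    (hdec : ∀ a b x y, P a b x y = p * PL a b x y + (1 - p) * Q a b x y) :
    p ≤ (4 - |S1 P|) / 2 ∧ p ≤ (4 - |S2 P|) / 2 ∧
      p ≤ (4 - |S3 P|) / 2 ∧ p ≤ (4 - |S4 P|) / 2 := by
  have key := chsh_decomposition hQ hLF hp hdec
  have e1 : |S1 P| ≤ 4 - 2 * p := key 0 1 0 1
  -- `S2` and `S3` come from `S1` by exchanging the settings of one party, `S4` of both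
  have e2 : |S2 P| ≤ 4 - 2 * p := by
    convert key 0 1 1 0 using 2; unfold S2; ring
  have e3 : |S3 P| ≤ 4 - 2 * p := by
    convert key 1 0 0 1 using 2; unfold S3; ring
  have e4 : |S4 P| ≤ 4 - 2 * p := by
    convert key 1 0 1 0 using 2; unfold S4; ring
  refine ⟨?_, ?_, ?_, ?_⟩ <;> linarith
end
end

section
/- Let P be a behaviour with M settings that decomposes pointwise as P = p·P₁ + (1−p)·P₂ with p ∈ [0,1], where P₁ is a behaviour admitting an LHV+FHV model and P₂ is a behaviour admitting an FHV model with respect to a full-support setting distribution p_s. Then P admits an FHV model with setting distribution p_s whose local weight is at least p. -/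
/-!
The model of `P` is the disjoint union of a local-free model of `P1` and the free model of `P2`.
Its hidden variables are `Fin (n + N2.n)`; the first block carries the weights `p * q` with the
product responses `A * B`, the second the weights `(1 - p) * N2.q` with the responses of `N2`.
Each conditional distribution is taken equal to the unconditional one, so every point is free and
the marginal condition reduces to normalisation of the setting distribution. All points of the
first block are local, and their weights add up to `p`.
-/

open scoped BigOperators Classical
open Finset

noncomputable section

/-- A full-support probability distribution on pairs of settings. -/
def IsSettingDist {M : ℕ} (p : Fin M → Fin M → ℝ) : Prop :=
  (∀ x y, 0 < p x y) ∧ ∑ x, ∑ y, p x y = 1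

/-- A hidden-variable model of the behaviour `P` with setting distribution `p`,
with finite hidden-variable space `Fin n`. -/
structure HVModel (M : ℕ) (P : Bool → Bool → Fin M → Fin M → ℝ)
    (p : Fin M → Fin M → ℝ) where
  n : ℕ
  q : Fin n → ℝ
  q_nonneg : ∀ l, 0 ≤ q l
  q_sum : ∑ l, q l = 1
  qc : Fin M → Fin M → Fin n → ℝ
  qc_nonneg : ∀ x y l, 0 ≤ qc x y l
  qc_sum : ∀ x y, ∑ l, qc x y l = 1
  q_marg : ∀ l, q l = ∑ x, ∑ y, qc x y l * p x y
  Pc : Fin n → Bool → Bool → Fin M → Fin M → ℝ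
  Pc_nonneg : ∀ l a b x y, 0 ≤ Pc l a b x y
  Pc_sum : ∀ l x y, ∑ a, ∑ b, Pc l a b x y = 1
  reproduce : ∀ a b x y, P a b x y = ∑ l, Pc l a b x y * qc x y l

namespace HVModel

variable {M : ℕ} {P : Bool → Bool → Fin M → Fin M → ℝ} {p : Fin M → Fin M → ℝ}

/-- A hidden variable is local if the conditional outcome distribution factorises. -/
def IsLocalPoint (N : HVModel M P p) (l : Fin N.n) : Prop :=
  ∃ α β : Bool → Fin M → ℝ,
    (∀ a x, 0 ≤ α a x) ∧ (∀ x, ∑ a, α a x = 1) ∧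
    (∀ b y, 0 ≤ β b y) ∧ (∀ y, ∑ b, β b y = 1) ∧
    (∀ a b x y, N.Pc l a b x y = α a x * β b y)

/-- A hidden variable is free if it is independent of the settings. -/
def IsFreePoint (N : HVModel M P p) (l : Fin N.n) : Prop :=
  ∀ x y, N.qc x y l = N.q l

/-- The total weight of the local hidden variables. -/
def localWeight (N : HVModel M P p) : ℝ :=
  ∑ l, if N.IsLocalPoint l then N.q l else 0

/-- The total weight of the free hidden variables. -/
def freeWeight (N : HVModel M P p) : ℝ :=
  ∑ l, if N.IsFreePoint l then N.q l else 0

/-- An FHV model: every hidden variable is free. -/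
def IsFHV (N : HVModel M P p) : Prop := ∀ l, N.IsFreePoint l

/-- An LHV model: every hidden variable is local. -/
def IsLHV (N : HVModel M P p) : Prop := ∀ l, N.IsLocalPoint l

end HVModel

/-- Local weights achievable by FHV models of `P` with setting distribution `p`. -/
def FHVLocalWeights (M : ℕ) (P : Bool → Bool → Fin M → Fin M → ℝ)
    (p : Fin M → Fin M → ℝ) : Set ℝ :=
  {w | ∃ N : HVModel M P p, N.IsFHV ∧ w = N.localWeight}

/-- Free weights achievable by LHV models of `P` with setting distribution `p`. -/
def LHVFreeWeights (M : ℕ) (P : Bool → Bool → Fin M → Fin M → ℝ)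
    (p : Fin M → Fin M → ℝ) : Set ℝ :=
  {w | ∃ N : HVModel M P p, N.IsLHV ∧ w = N.freeWeight}

/-- The measure of locality `μ_L`. -/
def muL (M : ℕ) (P : Bool → Bool → Fin M → Fin M → ℝ) : ℝ :=
  ⨅ sp : {f : Fin M → Fin M → ℝ // IsSettingDist f}, sSup (FHVLocalWeights M P sp.1)

/-- The measure of free choice `μ_F`. -/
def muF (M : ℕ) (P : Bool → Bool → Fin M → Fin M → ℝ) : ℝ :=
  ⨅ sp : {f : Fin M → Fin M → ℝ // IsSettingDist f}, sSup (LHVFreeWeights M P sp.1)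

theorem stitch_FHV_models (M : ℕ) (P P1 P2 : Bool → Bool → Fin M → Fin M → ℝ)
    (hP : IsBehaviour P) (hP1 : IsBehaviour P1) (hP2 : IsBehaviour P2)
    (hLF : LocalFree P1) (p : ℝ) (hp : p ∈ Set.Icc (0 : ℝ) 1)
    (ps : Fin M → Fin M → ℝ) (hps : IsSettingDist ps)
    (hFHV2 : ∃ N2 : HVModel M P2 ps, N2.IsFHV)
    (hdec : ∀ a b x y, P a b x y = p * P1 a b x y + (1 - p) * P2 a b x y) :
    ∃ N : HVModel M P ps, N.IsFHV ∧ p ≤ N.localWeight := by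
  obtain ⟨n, q, A, B, hq, hqs, hA, hAs, hB, hBs, hrep⟩ := hLF
  obtain ⟨N2, hN2⟩ := hFHV2
  obtain ⟨hp0, hp1⟩ := hp
  have hw : ∀ l : Fin (n + N2.n),
      0 ≤ Fin.append (fun i => p * q i) (fun j => (1 - p) * N2.q j) l := by
    intro l
    refine Fin.addCases (fun i => ?_) (fun j => ?_) l
    · rw [Fin.append_left]
      exact mul_nonneg hp0 (hq i)
    · rw [Fin.append_right]
      exact mul_nonneg (sub_nonneg.2 hp1) (N2.q_nonneg j)
  have hws : ∑ l, Fin.append (fun i => p * q i) (fun j => (1 - p) * N2.q j) l = 1 := by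
    simp only [Fin.sum_univ_add, Fin.append_left, Fin.append_right, ← Finset.mul_sum, hqs,
      N2.q_sum]
    ring
  let N : HVModel M P ps :=
    { n := n + N2.n
      q := Fin.append (fun i => p * q i) (fun j => (1 - p) * N2.q j)
      q_nonneg := hw
      q_sum := hws
      qc := fun _ _ => Fin.append (fun i => p * q i) (fun j => (1 - p) * N2.q j)
      qc_nonneg := fun _ _ => hw
      qc_sum := fun _ _ => hws
      q_marg := fun l => by
        simp only [← Finset.mul_sum]
        rw [hps.2, mul_one]
      Pc := Fin.append (fun i a b x y => A a x i * B b y i) N2.Pc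
      Pc_nonneg := fun l => by
        refine Fin.addCases (fun i => ?_) (fun j => ?_) l
        · rw [Fin.append_left]
          exact fun a b x y => mul_nonneg (hA a x i) (hB b y i)
        · rw [Fin.append_right]
          exact N2.Pc_nonneg j
      Pc_sum := fun l => by
        refine Fin.addCases (fun i => ?_) (fun j => ?_) l
        · rw [Fin.append_left]
          intro x y
          simp only [← Finset.mul_sum, hBs, mul_one, hAs]
        · rw [Fin.append_right]
          exact N2.Pc_sum j
      reproduce := fun a b x y => by
        rw [hdec, hrep, N2.reproduce, Fin.sum_univ_add, Finset.mul_sum, Finset.mul_sum]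
        simp only [Fin.append_left, Fin.append_right]
        congr 1
        · exact Finset.sum_congr rfl fun i _ => by ring
        · refine Finset.sum_congr rfl fun j _ => ?_
          rw [hN2 j x y]
          ring }
  have hPc : ∀ i : Fin n,
      N.Pc (Fin.castAdd N2.n i) = fun a b x y => A a x i * B b y i :=
    Fin.append_left (fun i a b x y => A a x i * B b y i) N2.Pc
  have hloc : ∀ i : Fin n, N.IsLocalPoint (Fin.castAdd N2.n i) := fun i =>
    ⟨fun a x => A a x i, fun b y => B b y i, fun a x => hA a x i, fun x => hAs x i,
      fun b y => hB b y i, fun y => hBs y i, fun a b x y => by rw [hPc i]⟩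
  refine ⟨N, fun _ _ _ => rfl, ?_⟩
  have hsplit : N.localWeight =
      (∑ i : Fin n, if N.IsLocalPoint (Fin.castAdd N2.n i) then N.q (Fin.castAdd N2.n i) else 0) +
      ∑ j : Fin N2.n, if N.IsLocalPoint (Fin.natAdd n j) then N.q (Fin.natAdd n j) else 0 :=
    Fin.sum_univ_add (a := n) (b := N2.n) fun l => if N.IsLocalPoint l then N.q l else 0
  have hfirst : (∑ i : Fin n,
      if N.IsLocalPoint (Fin.castAdd N2.n i) then N.q (Fin.castAdd N2.n i) else 0) = p := by
    calc _ = ∑ i : Fin n, p * q i := Finset.sum_congr rfl fun i _ => by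
            rw [if_pos (hloc i)]
            exact Fin.append_left (fun i => p * q i) (fun j => (1 - p) * N2.q j) i
      _ = p := by rw [← Finset.mul_sum, hqs, mul_one]
  -- Points of the second block may happen to be local too, hence only an inequality.
  rw [hsplit, hfirst]
  refine le_add_of_nonneg_right (Finset.sum_nonneg fun j _ => ?_)
  split_ifs
  · exact N.q_nonneg _
  · exact le_rfl
end
end

section
/- (Fine's theorem, sufficiency direction.) Every non-signalling behaviour P with two settings x,y ∈ {0,1} satisfying the four CHSH inequalities |S_i(P)| ≤ 2 for i = 1,…,4 admits an LHV+FHV model. -/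
/-!
Fine's gluing argument, with the pair `(b₀, b₁)` of Bob's two outcomes as hidden variable.

It suffices to find, for each setting `x`, a joint law `w x a b₀ b₁` of Alice's outcome and both of
Bob's outcomes that reproduces `P(·,·|x,0)` and `P(·,·|x,1)`, in such a way that the law of
`(b₀, b₁)` does not depend on `x` (`localFree_of_joint`): Bob then answers deterministically and
Alice answers with the conditional law of `a` given `(b₀, b₁)`.

With `P(·,·|x,·)` fixed, the number `T x a = w x a + +` determines `w x a`, and nonnegativity of `w`
says exactly that `T x a` lies in the interval from `tripleLower P x a` to `tripleUpper P x a`. The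
law of `(b₀, b₁)` is independent of `x` iff the sum of `T x a` over `a` is. The sum of the two intervals for
`x = 0` therefore has to meet the one for `x = 1`; once the maxima and minima are expanded, this is
a list of linear inequalities, each following from positivity, non-signalling and the CHSH
inequalities (`tripleLower_add_le`).
-/

open scoped BigOperators Classical
open Finset

noncomputable section

/-- The least value of the probability of `(a, b₀ = +, b₁ = +)` at setting `x` which keeps the
probabilities of `(a, +, +)` and `(a, -, -)` nonnegative. -/
def tripleLower (P : Bool → Bool → Fin 2 → Fin 2 → ℝ) (x : Fin 2) (a : Bool) : ℝ :=
  max 0 (P a true x 1 - P a false x 0)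

/-- The greatest value of the probability of `(a, b₀ = +, b₁ = +)` at setting `x` which keeps the
probabilities of `(a, +, -)` and `(a, -, +)` nonnegative. -/
def tripleUpper (P : Bool → Bool → Fin 2 → Fin 2 → ℝ) (x : Fin 2) (a : Bool) : ℝ :=
  min (P a true x 0) (P a true x 1)

lemma tripleLower_le_tripleUpper {P : Bool → Bool → Fin 2 → Fin 2 → ℝ}
    (hP : IsBehaviour P) (hNS : NonSignalling P) (x : Fin 2) (a : Bool) :
    tripleLower P x a ≤ tripleUpper P x a := by
  have hn := hNS.1 a x 0 1
  simp only [Fintype.sum_bool] at hn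
  have h₁ := hP.1 a true x 0
  have h₂ := hP.1 a true x 1
  have h₃ := hP.1 a false x 0
  have h₄ := hP.1 a false x 1
  refine max_le (le_min h₁ h₂) (le_min ?_ ?_) <;> linarith

/-- The CHSH inequalities enter here: the sums of the admissible intervals for the two settings of
Alice overlap. The cases `x = x'` hold for every non-signalling behaviour. -/
lemma tripleLower_add_le {P : Bool → Bool → Fin 2 → Fin 2 → ℝ}
    (hP : IsBehaviour P) (hNS : NonSignalling P)
    (h1 : |S1 P| ≤ 2) (h2 : |S2 P| ≤ 2) (h3 : |S3 P| ≤ 2) (h4 : |S4 P| ≤ 2) (x x' : Fin 2) :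
    tripleLower P x true + tripleLower P x false ≤
      tripleUpper P x' true + tripleUpper P x' false := by
  by_cases hx : x = x'
  · subst hx
    exact add_le_add (tripleLower_le_tripleUpper hP hNS x _) (tripleLower_le_tripleUpper hP hNS x _)
  obtain ⟨hpos, hsum⟩ := hP
  obtain ⟨hA, hB⟩ := hNS
  simp only [S1, S2, S3, S4, corr, outVal, Fintype.sum_bool, abs_le, if_true, Bool.false_eq_true,
    if_false] at h1 h2 h3 h4
  simp only [Fintype.sum_bool] at hsum hA hB
  have hs00 := hsum 0 0
  have hs01 := hsum 0 1
  have hs10 := hsum 1 0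
  have hs11 := hsum 1 1
  have hA0t := hA true 0 0 1
  have hA1t := hA true 1 0 1
  have hA0f := hA false 0 0 1
  have hA1f := hA false 1 0 1
  have hB0t := hB true 0 0 1
  have hB1t := hB true 1 0 1
  have hB0f := hB false 0 0 1
  have hB1f := hB false 1 0 1
  have p1 := hpos true true 0 0
  have p2 := hpos true true 0 1
  have p3 := hpos true false 0 0
  have p4 := hpos true false 0 1
  have p5 := hpos false true 0 0
  have p6 := hpos false true 0 1
  have p7 := hpos false false 0 0
  have p8 := hpos false false 0 1
  have r1 := hpos true true 1 0
  have r2 := hpos true true 1 1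
  have r3 := hpos true false 1 0
  have r4 := hpos true false 1 1
  have r5 := hpos false true 1 0
  have r6 := hpos false true 1 1
  have r7 := hpos false false 1 0
  have r8 := hpos false false 1 1
  obtain ⟨h1l, h1u⟩ := h1
  obtain ⟨h2l, h2u⟩ := h2
  obtain ⟨h3l, h3u⟩ := h3
  obtain ⟨h4l, h4u⟩ := h4
  have hcases : (x = 0 ∧ x' = 1) ∨ (x = 1 ∧ x' = 0) := by omega
  clear hpos hsum hA hB hx
  unfold tripleLower tripleUpper
  rcases hcases with ⟨rfl, rfl⟩ | ⟨rfl, rfl⟩ <;>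
  · rcases max_cases (0 : ℝ) _ with ⟨e₁, -⟩ | ⟨e₁, -⟩ <;> rw [e₁] <;>
    rcases max_cases (0 : ℝ) _ with ⟨e₂, -⟩ | ⟨e₂, -⟩ <;> rw [e₂] <;>
    rcases min_cases (P true true _ 0) (P true true _ 1) with ⟨e₃, -⟩ | ⟨e₃, -⟩ <;> rw [e₃] <;>
    rcases min_cases (P false true _ 0) (P false true _ 1) with ⟨e₄, -⟩ | ⟨e₄, -⟩ <;> rw [e₄] <;>
    clear e₁ e₂ e₃ e₄ <;> linarith

/-- A point of the sum of two intervals splits as a sum of points of the intervals. -/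
lemma exists_split {l u : Bool → ℝ} (hlu : ∀ a, l a ≤ u a) {β : ℝ}
    (hl : l true + l false ≤ β) (hu : β ≤ u true + u false) :
    ∃ t : Bool → ℝ, (∀ a, l a ≤ t a ∧ t a ≤ u a) ∧ t true + t false = β := by
  have ht := hlu true
  have hf := hlu false
  refine ⟨fun a => if a then max (l true) (β - u false) else β - max (l true) (β - u false),
    ?_, by simp⟩
  rintro (_ | _)
  · have h₁ : max (l true) (β - u false) ≤ β - l false := max_le (by linarith) (by linarith)
    have h₂ := le_max_right (l true) (β - u false)
    constructor <;> simp only [Bool.false_eq_true, if_false] <;> linarith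
  · exact ⟨le_max_left _ _, max_le ht (by linarith)⟩

/-- A joint law `w x a b₀ b₁` of Alice's outcome and both of Bob's, for each `x`, with
`x`-independent `(b₀, b₁)`-marginal `q`, yields a local model. -/
lemma localFree_of_joint {P : Bool → Bool → Fin 2 → Fin 2 → ℝ}
    (w : Fin 2 → Bool → Bool × Bool → ℝ) (q : Bool × Bool → ℝ)
    (hw : ∀ x a l, 0 ≤ w x a l) (hq : ∀ x l, ∑ a, w x a l = q l) (hq1 : ∑ l, q l = 1)
    (h0 : ∀ a b x, P a b x 0 = ∑ c, w x a (b, c))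
    (h1 : ∀ a b x, P a b x 1 = ∑ c, w x a (c, b)) : LocalFree P := by
  have hq0 : ∀ l, 0 ≤ q l := fun l => hq 0 l ▸ sum_nonneg fun a _ => hw 0 a l
  -- Where `q` vanishes the conditional law is undefined, and the uniform law is used instead.
  let A : Bool → Fin 2 → Bool × Bool → ℝ := fun a x l => if q l = 0 then 1 / 2 else w x a l / q l
  let B : Bool → Fin 2 → Bool × Bool → ℝ := fun b y l =>
    if (if y = 0 then l.1 else l.2) = b then 1 else 0
  have hqA : ∀ a x l, q l * A a x l = w x a l := by
    intro a x l
    by_cases h : q l = 0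
    · have hz := (sum_eq_zero_iff_of_nonneg fun a _ => hw x a l).1 ((hq x l).trans h)
      rw [h, zero_mul, hz a (mem_univ a)]
    · simp only [A, if_neg h]
      field_simp
  let e := (Fintype.equivFin (Bool × Bool)).symm
  refine ⟨_, fun i => q (e i), fun a x i => A a x (e i), fun b y i => B b y (e i),
    fun i => hq0 _, ?_, ?_, ?_, ?_, ?_, ?_⟩
  · rw [e.sum_comp q, hq1]
  · intro a x i
    simp only [A]
    split_ifs
    · norm_num
    · exact div_nonneg (hw _ _ _) (hq0 _)
  · intro x i
    by_cases h : q (e i) = 0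
    · simp [A, h]
    · simp only [A, if_neg h]
      rw [← sum_div, hq, div_self h]
  · intro b y i
    simp only [B]
    split_ifs <;> norm_num
  · intro y i
    simp [B]
  · intro a b x y
    rw [e.sum_comp fun l => q l * A a x l * B b y l]
    simp only [hqA, B]
    fin_cases y
    · cases b <;> simp [h0, Fintype.sum_prod_type]
    · cases b <;> simp [h1, Fintype.sum_prod_type]

theorem fine_sufficiency (P : Bool → Bool → Fin 2 → Fin 2 → ℝ)
    (hP : IsBehaviour P) (hNS : NonSignalling P)
    (h1 : |S1 P| ≤ 2) (h2 : |S2 P| ≤ 2) (h3 : |S3 P| ≤ 2) (h4 : |S4 P| ≤ 2) :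
    LocalFree P := by
  have hle := tripleLower_add_le hP hNS h1 h2 h3 h4
  -- `β` is the common probability of `(b₀, b₁) = (+, +)`.
  obtain ⟨β, hβl, hβu⟩ : ∃ β : ℝ,
      (∀ x, tripleLower P x true + tripleLower P x false ≤ β) ∧
      (∀ x, β ≤ tripleUpper P x true + tripleUpper P x false) :=
    ⟨max (tripleLower P 0 true + tripleLower P 0 false)
        (tripleLower P 1 true + tripleLower P 1 false),
      Fin.forall_fin_two.2 ⟨le_max_left _ _, le_max_right _ _⟩,
      fun x => max_le (hle 0 x) (hle 1 x)⟩
  choose T hT hTβ using fun x =>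
    exists_split (tripleLower_le_tripleUpper hP hNS x) (hβl x) (hβu x)
  obtain ⟨hpos, hsum⟩ := hP
  obtain ⟨hA, hB⟩ := hNS
  simp only [Fintype.sum_bool] at hsum hA hB
  -- The joint law of `(a, b₀, b₁)` forced by `T` and the two-party marginals.
  let w : Fin 2 → Bool → Bool × Bool → ℝ := fun x a l =>
    match l with
    | (true, true) => T x a
    | (true, false) => P a true x 0 - T x a
    | (false, true) => P a true x 1 - T x a
    | (false, false) => P a false x 0 - P a true x 1 + T x a
  have hw1 : ∀ l, ∑ a, w 1 a l = ∑ a, w 0 a l := by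
    have e₀ := hTβ 0
    have e₁ := hTβ 1
    have hB0t := hB true 0 0 1
    have hB1t := hB true 1 0 1
    have hB0f := hB false 0 0 1
    rintro ⟨_ | _, _ | _⟩ <;> simp only [Fintype.sum_bool, w] <;> linarith
  refine localFree_of_joint w (fun l => ∑ a, w 0 a l) ?_ ?_ ?_ ?_ ?_
  · intro x a l
    obtain ⟨hl, hu⟩ := hT x a
    obtain ⟨hl₁, hl₂⟩ := max_le_iff.1 hl
    obtain ⟨hu₁, hu₂⟩ := le_min_iff.1 hu
    rcases l with ⟨_ | _, _ | _⟩ <;> simp only [w] <;> linarith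
  · exact Fin.forall_fin_two.2 ⟨fun _ => rfl, hw1⟩
  · have := hsum 0 0
    simp only [Fintype.sum_prod_type, Fintype.sum_bool, w]
    linarith
  · rintro a (_ | _) x <;> simp only [Fintype.sum_bool, w] <;> linarith [hA a x 0 1]
  · rintro a (_ | _) x <;> simp only [Fintype.sum_bool, w] <;> linarith [hA a x 0 1]
end
end

section
/- (Chained Bell inequality.) Every behaviour P with M ≥ 2 settings that admits an LHV+FHV model satisfies |Σ_{k=1}^{M} ⟨ab⟩_{k,k} + Σ_{k=1}^{M−1} ⟨ab⟩_{k+1,k} − ⟨ab⟩_{1,M}| ≤ 2M − 2, where ⟨ab⟩_{x,y} = Σ_{a,b} a·b·P(a,b|x,y). -/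
/-!
Conditioned on the hidden variable `l`, the correlator factorises as `E x l * F y l`, where
`E x l, F y l ∈ [-1, 1]` are the local expectations, so the chained expression is the `q`-average of
its values on products and it suffices to bound it there (`chain_bound`). That bound is by induction
on the number of settings: the chained expression with one more setting differs from the previous one
by a CHSH expression, in the settings `0, m + 1` of the first party and `m, m + 1` of the second,
which is at most `2` in absolute value (`chsh_bound`).
-/

open scoped BigOperators Classical
open Finset

noncomputable section

/-- The CHSH inequality for product correlators: the left side is at most
`|b - d| + |b + d| = 2 max(|b|, |d|)`. -/
lemma chsh_bound {a c b d : ℝ} (ha : |a| ≤ 1) (hc : |c| ≤ 1) (hb : |b| ≤ 1) (hd : |d| ≤ 1) :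
    |a * b + c * d + c * b - a * d| ≤ 2 := by
  have h1 : |a * (b - d)| ≤ |b - d| := by
    rw [abs_mul]; exact mul_le_of_le_one_left (abs_nonneg _) ha
  have h2 : |c * (b + d)| ≤ |b + d| := by
    rw [abs_mul]; exact mul_le_of_le_one_left (abs_nonneg _) hc
  have h3 : |b - d| + |b + d| ≤ 2 := by
    rw [abs_le] at hb hd
    rcases abs_cases (b - d) with h | h <;> rcases abs_cases (b + d) with h₂ | h₂ <;> linarith
  calc |a * b + c * d + c * b - a * d| = |a * (b - d) + c * (b + d)| := by ring_nf
    _ ≤ |a * (b - d)| + |c * (b + d)| := abs_add_le _ _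
    _ ≤ 2 := by linarith

/-- The chained inequality for product correlators with `m + 1` settings. -/
lemma chain_bound (m : ℕ) (α β : Fin (m + 1) → ℝ) (hα : ∀ k, |α k| ≤ 1) (hβ : ∀ k, |β k| ≤ 1) :
    |(∑ k, α k * β k) + (∑ k : Fin m, α k.succ * β k.castSucc) - α 0 * β (Fin.last m)|
      ≤ 2 * (m : ℝ) := by
  induction m with
  | zero => simp
  | succ m ih =>
    have h := ih (fun k => α k.castSucc) (fun k => β k.castSucc) (fun k => hα _) (fun k => hβ _)
    have hc := chsh_bound (hα 0) (hα (Fin.last (m + 1))) (hβ (Fin.last m).castSucc)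
      (hβ (Fin.last (m + 1)))
    rw [Fin.sum_univ_castSucc, Fin.sum_univ_castSucc (fun k : Fin (m + 1) => α k.succ * β k.castSucc)]
    simp only [Fin.castSucc_zero, Fin.succ_last, Fin.succ_castSucc] at h hc ⊢
    push_cast
    rw [abs_le] at h hc ⊢
    constructor <;> linarith [h.1, h.2, hc.1, hc.2]

/-- The expectation of a `±1` outcome lies in `[-1, 1]`. -/
lemma abs_expectation_le_one (p : Bool → ℝ) (h0 : ∀ a, 0 ≤ p a) (h1 : ∑ a, p a = 1) :
    |p true - p false| ≤ 1 := by
  rw [Fintype.sum_bool] at h1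
  have := h0 true
  have := h0 false
  rw [abs_le]
  constructor <;> linarith

theorem chained_Bell_inequality (M : ℕ) (hM : 2 ≤ M)
    (P : Bool → Bool → Fin M → Fin M → ℝ)
    (hP : IsBehaviour P) (hLF : LocalFree P) :
    |(∑ k : Fin M, corr P k k) +
      (∑ k : Fin (M - 1),
        corr P ⟨k.1 + 1, by have := k.isLt; omega⟩ ⟨k.1, by have := k.isLt; omega⟩) -
      corr P ⟨0, by omega⟩ ⟨M - 1, by omega⟩| ≤ 2 * (M : ℝ) - 2 := by
  obtain ⟨m, rfl⟩ : ∃ m, M = m + 1 := ⟨M - 1, by omega⟩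
  obtain ⟨n, q, A, B, hq, hq1, hA, hA1, hB, hB1, hPAB⟩ := hLF
  have hcorr : ∀ x y, corr P x y =
      ∑ l, q l * ((A true x l - A false x l) * (B true y l - B false y l)) := by
    intro x y
    simp only [corr, outVal, Fintype.sum_bool, hPAB, Finset.mul_sum, ← Finset.sum_add_distrib]
    refine Finset.sum_congr rfl fun l _ => ?_
    simp only [if_true, Bool.false_eq_true, if_false]
    ring
  -- After `M = m + 1`, the truncated `M - 1` in the statement is definitionally `m`.
  change |(∑ k : Fin (m + 1), corr P k k) + (∑ k : Fin m, corr P k.succ k.castSucc) -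
    corr P 0 (Fin.last m)| ≤ _
  simp only [hcorr]
  rw [Finset.sum_comm, Finset.sum_comm (s := (univ : Finset (Fin m))),
    ← Finset.sum_add_distrib, ← Finset.sum_sub_distrib]
  simp only [← Finset.mul_sum, ← mul_add, ← mul_sub]
  calc _ ≤ ∑ l, q l * (2 * (m : ℝ)) := by
        refine (Finset.abs_sum_le_sum_abs _ _).trans (Finset.sum_le_sum fun l _ => ?_)
        rw [abs_mul, abs_of_nonneg (hq l)]
        exact mul_le_mul_of_nonneg_left
          (chain_bound m (fun x => A true x l - A false x l) (fun y => B true y l - B false y l)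
            (fun x => abs_expectation_le_one (fun a => A a x l) (fun a => hA a x l) (hA1 x l))
            (fun y => abs_expectation_le_one (fun b => B b y l) (fun b => hB b y l) (hB1 y l)))
          (hq l)
    _ = 2 * ((m + 1 : ℕ) : ℝ) - 2 := by
        rw [← Finset.sum_mul, hq1]
        push_cast
        ring
end
end
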